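/- Let A > 13 and δ > 0 be fixed and let h ∈ 𝓗(A,δ). Then the function H⁺ is twice differentiable on the interval (0,4π), and there exists a constant C = C(A,h) such that |(H⁺)′(x)| ≤ C and |(H⁺)″(x)| ≤ C for all x ∈ (0,4π). -/

import Mathlib

open MeasureTheory Real Complex

/-- The Bessel function of the first kind `J_ν(x)`, for `x > 0`, defined via its power series,
where `(x/2)^w := exp (w * log (x/2))` with the real logarithm. -/
noncomputable def besselJ (ν : ℂ) (x : ℝ) : ℂ :=
  ∑' m : ℕ, ((-1) ^ m / ((Nat.factorial m : ℂ) * Complex.Gamma (m + ν + 1))) *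
    Complex.exp ((2 * m + ν) * Real.log (x / 2))

/-- The integral transform `H⁺(x) = (2i/π) ∫_ℝ h(t) J_{2it}(x) t / cosh(πt) dt`. -/
noncomputable def Hplus (h : ℝ → ℝ) (x : ℝ) : ℂ :=
  (2 * Complex.I / (π : ℂ)) *
    ∫ t : ℝ, (h t : ℂ) * besselJ (2 * Complex.I * t) x * ((t : ℂ) / (Real.cosh (π * t) : ℂ))

/-- `h : ℝ → ℝ` belongs to the class `𝓗(A, δ)`, witnessed by the holomorphic extension
`H : ℂ → ℂ` to the strip `{s : |Im s| ≤ A}`. -/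
structure IsInHClass (A δ : ℝ) (h : ℝ → ℝ) (H : ℂ → ℂ) : Prop where
  nonneg : ∀ t : ℝ, 0 ≤ h t
  even : ∀ t : ℝ, h (-t) = h t
  not_zero : ∃ t : ℝ, h t ≠ 0
  extends_h : ∀ t : ℝ, H (t : ℂ) = (h t : ℂ)
  even_ext : ∀ s : ℂ, H (-s) = H s
  holo : DifferentiableOn ℂ H {s : ℂ | |s.im| ≤ A}
  bound : ∃ C : ℝ, ∀ s : ℂ, |s.im| ≤ A → ‖H s‖ ≤ C * (1 + ‖s‖) ^ (-(2 + δ))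


lemma aux_norm_Gamma_one (y : ℝ) : 1 ≤ ‖Complex.Gamma (1 + Complex.I * y)‖ ^ 2 * Real.cosh (π * y) := by
  by_cases hy : y = 0
  · subst hy; simp
  have hne : (Complex.I * y : ℂ) ≠ 0 := by simp [hy]
  have h1 : ((‖Complex.Gamma (1 + Complex.I * y)‖ ^ 2 : ℝ) : ℂ) * (Real.sinh (π * y) : ℂ) = (π * y : ℝ) := by
    have e1 : ((‖Complex.Gamma (1 + Complex.I * y)‖ ^ 2 : ℝ) : ℂ)
        = Complex.Gamma (1 + Complex.I * y) * Complex.Gamma (1 - Complex.I * y) := by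
      rw [← Complex.normSq_eq_norm_sq, ← Complex.mul_conj, ← Complex.Gamma_conj]
      congr 2
      simp [Complex.conj_ofReal, sub_eq_add_neg]
    have hs : (Real.sinh (π * y) : ℂ) ≠ 0 := by
      exact_mod_cast Real.sinh_eq_zero.not.2 (mul_ne_zero Real.pi_ne_zero hy)
    have e2 : Complex.sin (π * (Complex.I * y)) = (Real.sinh (π * y) : ℂ) * Complex.I := by
      rw [Complex.ofReal_sinh, ← Complex.sin_mul_I]; push_cast; congr 1; ring
    rw [e1, add_comm 1 (Complex.I * (y:ℂ)), Complex.Gamma_add_one _ hne, mul_assoc (Complex.I * (y:ℂ)),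
      Complex.Gamma_mul_Gamma_one_sub, e2]
    field_simp
    push_cast; ring
  have h2 : ‖Complex.Gamma (1 + Complex.I * y)‖ ^ 2 * Real.sinh (π * y) = π * y := by
    exact_mod_cast h1
  -- sinh z / z ≤ cosh z
  have key : ∀ z : ℝ, 0 < z → Real.sinh z ≤ z * Real.cosh z := by
    intro z hz
    have hmono : MonotoneOn (fun z : ℝ => z * Real.cosh z - Real.sinh z) (Set.Ici 0) := by
      apply monotoneOn_of_deriv_nonneg (convex_Ici 0)
      · fun_prop
      · fun_prop
      · intro x hx
        rw [interior_Ici] at hx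
        have : HasDerivAt (fun z : ℝ => z * Real.cosh z - Real.sinh z)
          (1 * Real.cosh x + x * Real.sinh x - Real.cosh x) x :=
          ((hasDerivAt_id x).mul (Real.hasDerivAt_cosh x)).sub (Real.hasDerivAt_sinh x)
        rw [this.deriv]
        have : 0 ≤ x * Real.sinh x := mul_nonneg hx.le (Real.sinh_nonneg_iff.2 hx.le)
        linarith
    have := hmono (Set.self_mem_Ici) (Set.mem_Ici.2 hz.le) hz.le
    simp at this
    linarith
  set G := ‖Complex.Gamma (1 + Complex.I * y)‖ ^ 2
  have hG : 0 ≤ G := by positivity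
  rcases lt_or_gt_of_ne hy with h | h
  · have hz : 0 < -(π * y) := by nlinarith [Real.pi_pos]
    have := key _ hz
    rw [Real.sinh_neg, Real.cosh_neg] at this
    by_contra hc
    push Not at hc
    have := mul_le_mul_of_nonneg_left this hG
    nlinarith
  · have hz : 0 < (π * y) := by nlinarith [Real.pi_pos]
    have := key _ hz
    by_contra hc
    push Not at hc
    have := mul_le_mul_of_nonneg_left this hG
    nlinarith

lemma aux_cosh_two (t : ℝ) : Real.cosh (π * (2 * t)) ≤ 2 * Real.cosh (π * t) ^ 2 := by
  have : π * (2 * t) = 2 * (π * t) := by ring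
  rw [this, Real.cosh_two_mul, Real.sinh_sq]; linarith

lemma aux_G0 (t : ℝ) : 1 ≤ 2 * ‖Complex.Gamma (1 + 2 * Complex.I * t)‖ * Real.cosh (π * t) := by
  have h := aux_norm_Gamma_one (2 * t)
  have h2 := aux_cosh_two t
  have e : (1 + Complex.I * ((2 * t : ℝ) : ℂ)) = 1 + 2 * Complex.I * t := by push_cast; ring
  rw [e] at h
  have hG : 0 ≤ ‖Complex.Gamma (1 + 2 * Complex.I * t)‖ := norm_nonneg _
  have hc := Real.cosh_pos (π * t)
  have := mul_le_mul_of_nonneg_left h2 (sq_nonneg ‖Complex.Gamma (1 + 2 * Complex.I * t)‖)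
  have h3 : 1 ≤ (2 * ‖Complex.Gamma (1 + 2 * Complex.I * t)‖ * Real.cosh (π * t)) ^ 2 := by nlinarith
  by_contra hcon
  push Not at hcon
  have : 0 ≤ 2 * ‖Complex.Gamma (1 + 2 * Complex.I * t)‖ * Real.cosh (π * t) := by positivity
  nlinarith

lemma aux_beta (y r : ℝ) (hr : 0 < r) : ‖Complex.betaIntegral (1 + Complex.I * y) r‖ ≤ 1 / r := by
  rw [Complex.betaIntegral]
  have h1 : ∫ x : ℝ in (0:ℝ)..1, (1 - x) ^ (r - 1) = 1 / r := by
    rw [intervalIntegral.integral_comp_sub_left (fun x => x ^ (r - 1)) 1]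
    rw [integral_rpow (Or.inl (by linarith))]
    simp [Real.zero_rpow hr.ne']
  rw [← h1]
  apply intervalIntegral.norm_integral_le_of_norm_le zero_le_one
  · refine Filter.Eventually.mono (by simp [MeasureTheory.ae_iff] : ∀ᵐ x : ℝ, x ≠ 1) ?_
    intro x hx1 hx
    have hx0 : 0 < x := hx.1
    have hx2 : 0 < 1 - x := by have := lt_of_le_of_ne hx.2 hx1; linarith
    rw [norm_mul, Complex.norm_cpow_eq_rpow_re_of_pos hx0]
    have : (1 - (x:ℂ)) = ((1 - x : ℝ) : ℂ) := by push_cast; ring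
    rw [this, Complex.norm_cpow_eq_rpow_re_of_pos hx2]
    simp
  · have := (intervalIntegral.intervalIntegrable_rpow' (a := 0) (b := 1) (r := r - 1) (by linarith)).comp_sub_left 1
    simpa using this.symm

lemma aux_Gmono (y r : ℝ) (hr : 0 ≤ r) :
    Real.Gamma (r + 1) * ‖Complex.Gamma (1 + Complex.I * y)‖ ≤ ‖Complex.Gamma (1 + Complex.I * y + r)‖ := by
  rcases hr.eq_or_lt with h | h
  · subst h; simp
  have h1 := Complex.Gamma_mul_Gamma_eq_betaIntegral (s := 1 + Complex.I * y) (t := r) (by simp) (by simpa)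
  have h2 := congrArg norm h1
  rw [norm_mul, norm_mul, Complex.Gamma_ofReal, Complex.norm_real, Real.norm_of_nonneg (Real.Gamma_pos_of_pos h).le] at h2
  have h3 := mul_le_mul_of_nonneg_left (aux_beta y r h) (norm_nonneg (Complex.Gamma (1 + Complex.I * y + r)))
  rw [← h2] at h3
  rw [Real.Gamma_add_one h.ne']
  rw [mul_one_div, le_div_iff₀ h] at h3
  linarith

lemma aux_Gnat (s : ℂ) (hs : 1 ≤ s.re) (m : ℕ) : ‖Complex.Gamma s‖ ≤ ‖Complex.Gamma (m + s)‖ := by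
  induction m with
  | zero => simp
  | succ k ih =>
    have hre : 1 ≤ ((k:ℂ) + s).re := by
      simp; have : (0:ℝ) ≤ k := Nat.cast_nonneg k
      linarith
    have hn : 1 ≤ ‖(k:ℂ) + s‖ := hre.trans (Complex.re_le_norm _)
    have : (((k + 1 : ℕ) : ℂ) + s) = (k + s) + 1 := by push_cast; ring
    rw [this, Complex.Gamma_add_one _ (by intro h; rw [h] at hn; simp at hn; linarith), norm_mul]
    nlinarith [norm_nonneg (Complex.Gamma (k + s))]

lemma aux_G1 : ∃ c : ℝ, 0 < c ∧ ∀ (m : ℕ) (s : ℂ), -1 ≤ s.im → s.im ≤ 0 →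
    ‖(Complex.Gamma (m + 2 * Complex.I * s + 1))⁻¹‖ ≤ c * Real.cosh (π * s.re) := by
  obtain ⟨r0, hr0, hmin⟩ := (isCompact_Icc (a := (0:ℝ)) (b := 2)).exists_isMinOn (by simp)
    (f := fun r => Real.Gamma (r + 1)) (by
      intro r hr
      apply ContinuousAt.continuousWithinAt
      have h1 : ContinuousAt Real.Gamma (r + 1) := by
        apply (Real.differentiableAt_Gamma _).continuousAt
        intro m
        have := hr.1
        have : (0:ℝ) ≤ m := Nat.cast_nonneg m
        linarith
      exact ContinuousAt.comp (f := fun r : ℝ => r + 1) h1 (by fun_prop))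
  have hc0 : 0 < Real.Gamma (r0 + 1) := Real.Gamma_pos_of_pos (by linarith [hr0.1])
  refine ⟨2 / Real.Gamma (r0 + 1), by positivity, ?_⟩
  intro m s h1 h2
  have hm : Real.Gamma (r0 + 1) ≤ Real.Gamma (-2 * s.im + 1) :=
    hmin (a := -2 * s.im) ⟨by linarith, by linarith⟩
  have e1 : (m : ℂ) + 2 * Complex.I * s + 1 = m + (1 + Complex.I * ((2 * s.re : ℝ) : ℂ) + ((-2 * s.im : ℝ) : ℂ)) := by
    apply Complex.ext <;> simp <;> ring
  have g1 := aux_Gnat (1 + Complex.I * ((2 * s.re : ℝ) : ℂ) + ((-2 * s.im : ℝ) : ℂ)) (by simp; linarith) m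
  have g2 := aux_Gmono (2 * s.re) (-2 * s.im) (by linarith)
  have g0 := aux_G0 s.re
  have e : (1 + Complex.I * ((2 * s.re : ℝ) : ℂ)) = 1 + 2 * Complex.I * s.re := by push_cast; ring
  rw [e1, norm_inv]
  set X := ‖Complex.Gamma (m + (1 + Complex.I * ((2 * s.re : ℝ) : ℂ) + ((-2 * s.im : ℝ) : ℂ)))‖
  rw [← e] at g0
  set Y := ‖Complex.Gamma (1 + Complex.I * ((2 * s.re : ℝ) : ℂ))‖
  have hY : 0 ≤ Y := norm_nonneg _
  have hXY : Real.Gamma (r0 + 1) * Y ≤ X := (mul_le_mul_of_nonneg_right hm hY).trans (g2.trans g1)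
  have hcosh := Real.cosh_pos (π * s.re)
  have hYpos : 0 < Y := by
    rcases hY.eq_or_lt with h | h
    · rw [← h] at g0; simp at g0; linarith
    · exact h
  have hX : 0 < X := by nlinarith [mul_pos hc0 hYpos]
  rw [inv_le_iff_one_le_mul₀ hX, div_mul_eq_mul_div, div_mul_eq_mul_div, le_div_iff₀ hc0]
  nlinarith [mul_le_mul_of_nonneg_left hXY hcosh.le]

lemma aux_G2 (m : ℕ) (t : ℝ) :
    ‖(Complex.Gamma (m + 2 * Complex.I * (t - Complex.I) + 1))⁻¹‖ ≤ 2 * Real.cosh (π * t) / (1 + t ^ 2) := by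
  have e1 : (m : ℂ) + 2 * Complex.I * (t - Complex.I) + 1 = m + (1 + 2 * Complex.I * t + 1 + 1) := by
    linear_combination (-2) * Complex.I_sq
  have g1 := aux_Gnat (1 + 2 * Complex.I * t + 1 + 1) (by simp) m
  have n1 : (1 + 2 * Complex.I * t : ℂ) ≠ 0 := by
    intro h; have := congrArg Complex.re h; simp at this
  have n2 : (1 + 2 * Complex.I * t + 1 : ℂ) ≠ 0 := by
    intro h; have := congrArg Complex.re h; simp at this; try norm_num at this
  rw [Complex.Gamma_add_one _ n2, Complex.Gamma_add_one _ n1, norm_mul, norm_mul] at g1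
  have g0 := aux_G0 t
  rw [e1, norm_inv]
  set X := ‖Complex.Gamma (m + (1 + 2 * Complex.I * t + 1 + 1))‖
  set Y := ‖Complex.Gamma (1 + 2 * Complex.I * t)‖
  have hY : 0 ≤ Y := norm_nonneg _
  have b : ∀ z : ℂ, 1 ≤ z.re → z.im = 2 * t → Real.sqrt (1 + t ^ 2) ≤ ‖z‖ := by
    intro z h1 h2
    apply Real.sqrt_le_iff.2 ⟨norm_nonneg _, ?_⟩
    rw [← Complex.normSq_eq_norm_sq, Complex.normSq_apply, h2]
    nlinarith [sq_nonneg t]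
  have b1 := b (1 + 2 * Complex.I * t) (by simp) (by simp)
  have b2 := b (1 + 2 * Complex.I * t + 1) (by simp) (by simp)
  have b3 : 1 + t ^ 2 ≤ ‖(1 + 2 * Complex.I * t + 1 : ℂ)‖ * ‖(1 + 2 * Complex.I * t : ℂ)‖ := by
    have := mul_le_mul b2 b1 (Real.sqrt_nonneg _) (norm_nonneg _)
    rwa [Real.mul_self_sqrt (by positivity)] at this
  have hcosh := Real.cosh_pos (π * t)
  have hYpos : 0 < Y := by
    rcases hY.eq_or_lt with h | h
    · rw [← h] at g0; simp at g0; linarith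
    · exact h
  have hXY : (1 + t ^ 2) * Y ≤ X := by
    refine (mul_le_mul_of_nonneg_right b3 hY).trans ?_
    rw [mul_assoc]; exact g1
  have hp : (0:ℝ) < 1 + t ^ 2 := by positivity
  have hX : 0 < X := by nlinarith [mul_pos hp hYpos]
  rw [inv_le_iff_one_le_mul₀ hX, div_mul_eq_mul_div, le_div_iff₀ hp]
  nlinarith [mul_le_mul_of_nonneg_left hXY hcosh.le]

lemma aux_cosh_lower (t : ℝ) : 1 + t ^ 2 ≤ Real.cosh (π * t) := by
  have h1 : Real.cosh (π * t) = 1 + 2 * Real.sinh (π * t / 2) ^ 2 := by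
    have : π * t = 2 * (π * t / 2) := by ring
    rw [this, Real.cosh_two_mul, Real.cosh_sq]; ring_nf
  have h2 : (π * t / 2) ^ 2 ≤ Real.sinh (π * t / 2) ^ 2 := by
    rw [sq_le_sq, Real.abs_sinh]
    exact Real.self_le_sinh_iff.2 (abs_nonneg _)
  have h3 : t ^ 2 ≤ 2 * (π * t / 2) ^ 2 := by
    have := Real.pi_gt_three
    nlinarith [sq_nonneg t, mul_nonneg (sq_nonneg t) (by nlinarith : (0:ℝ) ≤ π ^ 2 - 9)]
  linarith

lemma aux_inv_cosh_integrable : Integrable (fun t : ℝ => 1 / (Real.cosh (π * t) : ℂ)) := by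
  refine integrable_inv_one_add_sq.mono' ?_ ?_
  · apply Continuous.aestronglyMeasurable
    refine continuous_const.div (by fun_prop) ?_
    intro t
    exact_mod_cast (Real.cosh_pos _).ne'
  · refine Filter.Eventually.of_forall fun t => ?_
    rw [norm_div, norm_one, Complex.norm_real, Real.norm_of_nonneg (Real.cosh_pos _).le, one_div]
    exact inv_anti₀ (by positivity) (aux_cosh_lower t)

lemma aux_cosh_norm (s : ℂ) (hs : 1 ≤ |s.re|) :
    Real.cosh (π * s.re) / 2 ≤ ‖Complex.cosh (π * s)‖ := by
  have h1 : |Real.sinh (π * s.re)| ≤ ‖Complex.cosh (π * s)‖ := by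
    apply abs_le_of_sq_le_sq _ (norm_nonneg _)
    have e : (π : ℂ) * s = ((π * s.re : ℝ) : ℂ) + ((π * s.im : ℝ) : ℂ) * Complex.I := by
      apply Complex.ext <;> simp
    rw [e, Complex.cosh_add, Complex.cosh_mul_I, Complex.sinh_mul_I, ← Complex.normSq_eq_norm_sq,
      ← Complex.ofReal_cosh, ← Complex.ofReal_sinh, ← Complex.ofReal_cos, ← Complex.ofReal_sin,
      Complex.normSq_apply]
    simp only [Complex.add_re, Complex.add_im, Complex.mul_re, Complex.mul_im, Complex.ofReal_re,
      Complex.ofReal_im, Complex.I_re, Complex.I_im]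
    nlinarith [Real.cosh_sq (π * s.re), Real.sin_sq_add_cos_sq (π * s.im), sq_nonneg (Real.cos (π * s.im))]
  have h2 : Real.cosh (π * s.re) ≤ 2 * |Real.sinh (π * s.re)| := by
    rw [Real.abs_sinh, ← Real.cosh_abs]
    have hx : 1 ≤ |π * s.re| := by
      rw [abs_mul, abs_of_pos Real.pi_pos]; nlinarith [Real.pi_gt_three]
    have h3 := Real.self_le_sinh_iff.2 (abs_nonneg (π * s.re))
    have h4 := Real.cosh_sub_sinh |π * s.re|
    have h5 : Real.exp (-|π * s.re|) ≤ 1 := Real.exp_le_one_iff.2 (by linarith)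
    linarith
  linarith

lemma aux_cosh_zero (s : ℂ) (h1 : -(3/2) < s.im) (h2 : s.im < 1/2) (h : Complex.cosh (π * s) = 0) :
    s = -(Complex.I / 2) := by
  rw [← Complex.cos_mul_I, Complex.cos_eq_zero_iff] at h
  obtain ⟨k, hk⟩ := h
  have hpi : (π : ℂ) ≠ 0 := by exact_mod_cast Real.pi_ne_zero
  have h3 : s * Complex.I = (2 * k + 1) / 2 := by
    have : (π : ℂ) * (s * Complex.I) = π * ((2 * k + 1) / 2) := by rw [← mul_assoc, hk]; ring
    exact mul_left_cancel₀ hpi this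
  have h4 : s = - Complex.I * ((2 * k + 1) / 2) := by
    rw [← h3]; linear_combination s * Complex.I_sq
  have h5 : s.im = -((2 * k + 1) / 2) := by
    rw [h4]
    have : ((2 * k + 1) / 2 : ℂ) = (((2 * k + 1) / 2 : ℝ) : ℂ) := by push_cast; ring
    rw [this]; simp
  rw [h5] at h1 h2
  have k1 : (k : ℝ) < 1 := by linarith
  have k2 : (-1 : ℝ) < k := by linarith
  have k1' : k < 1 := by exact_mod_cast k1
  have k2' : -1 < k := by exact_mod_cast k2
  have : k = 0 := by omega
  rw [h4, this]; simp; ring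

lemma aux_shift (K : ℂ → ℂ) (A : ℝ) (hA : 1 < A) (hK : DifferentiableOn ℂ K {s | |s.im| < A})
    (φ : ℝ → ℝ) (hφ : Filter.Tendsto φ Filter.atTop (nhds 0))
    (hb : ∀ s : ℂ, -1 ≤ s.im → s.im ≤ 0 → ‖K s‖ ≤ φ |s.re| * Real.cosh (π * s.re))
    (hi0 : Integrable fun t : ℝ => K t / (Real.cosh (π * t) : ℂ))
    (hi1 : Integrable fun t : ℝ => K (t - Complex.I) / (Real.cosh (π * t) : ℂ)) :
    ∫ t : ℝ, K t / (Real.cosh (π * t) : ℂ) = - (∫ t : ℝ, K (t - Complex.I) / (Real.cosh (π * t) : ℂ))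
      + 2 * (∫ t : ℝ, 1 / (Real.cosh (π * t) : ℂ)) * K (-(Complex.I / 2)) := by
  set s0 : ℂ := -(Complex.I / 2) with hs0
  set ch : ℂ → ℂ := fun s => Complex.cosh (π * s) with hch
  have him : s0.im = -(1/2) := by simp [hs0]
  set U : Set ℂ := {s | |s.im| < A ∧ -(3/2) < s.im ∧ s.im < 1/2} with hU
  have hUo : IsOpen U := by
    apply IsOpen.inter
    · exact isOpen_lt (continuous_abs.comp Complex.continuous_im) continuous_const
    · exact IsOpen.inter (isOpen_lt continuous_const Complex.continuous_im)
        (isOpen_lt Complex.continuous_im continuous_const)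
  have hs0U : s0 ∈ U := by
    refine ⟨?_, ?_, ?_⟩ <;> rw [him]
    · rw [abs_neg, abs_of_pos] <;> linarith
    · norm_num
    · norm_num
  have hchd : Differentiable ℂ ch := by
    intro s; simp only [hch]; fun_prop
  have hch0 : ch s0 = 0 := by
    simp only [hch, hs0]
    have : (π : ℂ) * -(Complex.I / 2) = -((π / 2) * Complex.I) := by ring
    rw [this, Complex.cosh_neg, Complex.cosh_mul_I, Complex.cos_pi_div_two]
  have hchderiv : deriv ch s0 ≠ 0 := by
    have h1 : HasDerivAt ch (Complex.sinh (π * s0) * (π * 1)) s0 :=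
      (((hasDerivAt_id s0).const_mul (π : ℂ))).ccosh
    have : (π : ℂ) * s0 = -((π / 2) * Complex.I) := by rw [hs0]; ring
    rw [h1.deriv, this, Complex.sinh_neg, Complex.sinh_mul_I, Complex.sin_pi_div_two]
    have hpi : (π : ℂ) ≠ 0 := by exact_mod_cast Real.pi_ne_zero
    simp [hpi]
  set q : ℂ → ℂ := fun s => dslope K s0 s / dslope ch s0 s with hq
  have hUn : U ∈ nhds s0 := hUo.mem_nhds hs0U
  have hqd : DifferentiableOn ℂ q U := by
    apply DifferentiableOn.div
    · exact (Complex.differentiableOn_dslope hUn).2 (hK.mono fun s hs => hs.1)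
    · exact (Complex.differentiableOn_dslope hUn).2 hchd.differentiableOn
    · intro s hs
      by_cases h : s = s0
      · rw [h, dslope_same]; exact hchderiv
      · rw [dslope_of_ne _ h, slope, vsub_eq_sub, hch0, sub_zero]
        refine smul_ne_zero (inv_ne_zero (sub_ne_zero.2 h)) ?_
        intro hz
        exact h (aux_cosh_zero s hs.2.1 hs.2.2 hz)
  have hqe : ∀ s, s ≠ s0 → q s = (K s - K s0) / ch s := by
    intro s h
    simp only [hq]
    rw [dslope_of_ne _ h, dslope_of_ne _ h, slope, slope, vsub_eq_sub, vsub_eq_sub, hch0, sub_zero,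
      smul_eq_mul, smul_eq_mul, mul_div_mul_left _ _ (inv_ne_zero (sub_ne_zero.2 h))]
  have hrect : ∀ T : ℝ, (∫ x : ℝ in (-T)..T, q (x - Complex.I)) - (∫ x : ℝ in (-T)..T, q x) +
      Complex.I * (∫ y : ℝ in (-1)..0, q (T + y * Complex.I)) -
      Complex.I * (∫ y : ℝ in (-1)..0, q (-T + y * Complex.I)) = 0 := by
    intro T
    have := Complex.integral_boundary_rect_eq_zero_of_differentiableOn q (⟨-T, -1⟩ : ℂ) (⟨T, 0⟩ : ℂ)
      (hqd.mono (by
        intro s hs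
        have h2 := hs.2
        simp only [Set.mem_preimage] at h2
        rw [Set.uIcc_of_le (by norm_num)] at h2
        refine ⟨?_, by linarith [h2.1], by linarith [h2.2]⟩
        rw [abs_lt]; constructor <;> linarith [h2.1, h2.2]))
    simpa [sub_eq_add_neg] using this
  set Z : ℂ := K s0
  set c : ℝ → ℂ := fun t => (Real.cosh (π * t) : ℂ) with hc
  have hq0 : ∀ t : ℝ, q t = K t / c t - Z * (1 / c t) := by
    intro t
    rw [hqe t (by intro h; have := congrArg Complex.im h; rw [him] at this; simp at this)]
    simp only [hch, hc]; push_cast; ring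
  have hq1 : ∀ t : ℝ, q (t - Complex.I) = -(K (t - Complex.I) / c t) + Z * (1 / c t) := by
    intro t
    rw [hqe _ (by intro h; have := congrArg Complex.im h; rw [him] at this; simp at this; try norm_num at this)]
    have : ch (t - Complex.I) = - c t := by
      simp only [hch, hc]
      rw [mul_sub, Complex.cosh_sub, Complex.cosh_mul_I, Complex.sinh_mul_I, Complex.cos_pi, Complex.sin_pi]
      push_cast; ring
    rw [this]; simp only [Z]; ring
  have hI := aux_inv_cosh_integrable
  have hint0 : Integrable fun t : ℝ => q t := by
    simp_rw [hq0]; exact hi0.sub (hI.const_mul Z)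
  have hint1 : Integrable fun t : ℝ => q (t - Complex.I) := by
    simp_rw [hq1]; exact hi1.neg.add (hI.const_mul Z)
  have l0 := intervalIntegral_tendsto_integral hint0 Filter.tendsto_neg_atTop_atBot Filter.tendsto_id
  have l1 := intervalIntegral_tendsto_integral hint1 Filter.tendsto_neg_atTop_atBot Filter.tendsto_id
  set ψ : ℝ → ℝ := fun T => 2 * φ T + 2 * (‖Z‖ / T) with hψ
  have hψ0 : Filter.Tendsto ψ Filter.atTop (nhds 0) := by
    have h1 : Filter.Tendsto (fun T : ℝ => ‖Z‖ / T) Filter.atTop (nhds 0) :=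
      tendsto_const_nhds.div_atTop Filter.tendsto_id
    have := (hφ.const_mul 2).add (h1.const_mul 2)
    simpa [hψ] using this
  have hvert : ∀ s : ℂ, 1 ≤ |s.re| → -1 ≤ s.im → s.im ≤ 0 → ‖q s‖ ≤ ψ |s.re| := by
    intro s h1 h2 h3
    rw [hqe s (by intro h; rw [h] at h1; simp [hs0] at h1; norm_num at h1), norm_div]
    have hn := aux_cosh_norm s h1
    have hcp := Real.cosh_pos (π * s.re)
    have hT : |s.re| ≤ Real.cosh (π * s.re) := by
      have := aux_cosh_lower s.re
      nlinarith [sq_abs s.re]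
    rw [div_le_iff₀ (by simp only [hch]; linarith)]
    have hk : ‖K s - Z‖ ≤ φ |s.re| * Real.cosh (π * s.re) + ‖Z‖ := (norm_sub_le _ _).trans (by linarith [hb s h2 h3])
    refine hk.trans ?_
    have hφn : 0 ≤ φ |s.re| := by
      have := (norm_nonneg _).trans (hb s h2 h3)
      exact nonneg_of_mul_nonneg_left this hcp
    have hψn : 0 ≤ ψ |s.re| := by simp only [hψ]; positivity
    refine le_trans ?_ (mul_le_mul_of_nonneg_left hn hψn)
    simp only [hψ]
    have : ‖Z‖ ≤ ‖Z‖ / |s.re| * Real.cosh (π * s.re) := by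
      rw [div_mul_eq_mul_div, le_div_iff₀ (by linarith)]
      exact mul_le_mul_of_nonneg_left hT (norm_nonneg _)
    nlinarith
  have v1 : Filter.Tendsto (fun T : ℝ => ∫ y : ℝ in (-1)..0, q (T + y * Complex.I)) Filter.atTop (nhds 0) := by
    refine squeeze_zero_norm' ?_ hψ0
    filter_upwards [Filter.eventually_ge_atTop 1] with T hT
    have := intervalIntegral.norm_integral_le_of_norm_le_const (a := -1) (b := 0) (C := ψ T)
      (f := fun y : ℝ => q (T + y * Complex.I)) (by
        intro y hy
        rw [Set.uIoc_of_le (by norm_num)] at hy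
        have := hvert (T + y * Complex.I) (by simp [abs_of_nonneg (by linarith : 0 ≤ T), hT])
          (by simp; linarith [hy.1]) (by simp; linarith [hy.2])
        simpa [abs_of_nonneg (by linarith : 0 ≤ T)] using this)
    simpa using this
  have v2 : Filter.Tendsto (fun T : ℝ => ∫ y : ℝ in (-1)..0, q (-T + y * Complex.I)) Filter.atTop (nhds 0) := by
    refine squeeze_zero_norm' ?_ hψ0
    filter_upwards [Filter.eventually_ge_atTop 1] with T hT
    have := intervalIntegral.norm_integral_le_of_norm_le_const (a := -1) (b := 0) (C := ψ T)
      (f := fun y : ℝ => q (-T + y * Complex.I)) (by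
        intro y hy
        rw [Set.uIoc_of_le (by norm_num)] at hy
        have := hvert (-T + y * Complex.I) (by simp [abs_of_nonneg (by linarith : 0 ≤ T), hT])
          (by simp; linarith [hy.1]) (by simp; linarith [hy.2])
        simpa [abs_of_nonneg (by linarith : 0 ≤ T)] using this)
    simpa using this
  have lim := ((l1.sub l0).add (v1.const_mul Complex.I)).sub (v2.const_mul Complex.I)
  have lim0 : (∫ t : ℝ, q (t - Complex.I)) - (∫ t : ℝ, q t) + Complex.I * 0 - Complex.I * 0 = 0 := by
    refine tendsto_nhds_unique lim ?_
    refine tendsto_const_nhds.congr fun T => ?_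
    exact (hrect T).symm
  have J1 : ∫ t : ℝ, q (t - Complex.I) = -(∫ t : ℝ, K (t - Complex.I) / c t) + Z * ∫ t : ℝ, 1 / c t := by
    simp_rw [hq1]
    rw [← integral_neg, ← integral_const_mul]
    exact integral_add hi1.neg (hI.const_mul Z)
  have J0 : ∫ t : ℝ, q t = (∫ t : ℝ, K t / c t) - Z * ∫ t : ℝ, 1 / c t := by
    simp_rw [hq0]
    rw [← integral_const_mul]
    exact integral_sub hi0 (hI.const_mul Z)
  rw [J1, J0] at lim0
  linear_combination -lim0

lemma aux_lap {α : Type*} [MeasurableSpace α] (μ : Measure α) (c l : α → ℂ)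
    (hc : Measurable c) (hl : Measurable l) (w : α → ℝ) (hw : Integrable w μ)
    (hb : ∀ p, ‖c p‖ * (1 + ‖l p‖) ^ 2 * Real.exp ((l p).re * Real.log (2 * π)) ≤ w p)
    (hl1 : ∀ p, l p = 1 ∨ 2 ≤ (l p).re) :
    ∃ F' F'' : ℝ → ℂ, ∃ C : ℝ, ∀ x ∈ Set.Ioo (0 : ℝ) (4 * π),
      HasDerivAt (fun x : ℝ => ∫ p, c p * Complex.exp (l p * Real.log (x / 2)) ∂μ) (F' x) x ∧
      HasDerivAt F' (F'' x) x ∧ ‖F' x‖ ≤ C ∧ ‖F'' x‖ ≤ C ∧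
      Integrable (fun p => c p * Complex.exp (l p * Real.log (x / 2))) μ := by
  set U0 : ℝ := Real.log (2 * π) with hU0
  set E : ℕ → ℝ → ℂ := fun k u => ∫ p, c p * l p ^ k * Complex.exp (l p * u) ∂μ with hE
  have hre : ∀ p, 1 ≤ (l p).re := by
    intro p; rcases hl1 p with h | h
    · rw [h]; simp
    · linarith
  have hexp : ∀ p (u : ℝ), ‖Complex.exp (l p * u)‖ = Real.exp ((l p).re * u) := by
    intro p u; rw [Complex.norm_exp]; simp
  have hpow : ∀ p (k : ℕ), k ≤ 2 → ‖l p‖ ^ k ≤ (1 + ‖l p‖) ^ 2 := by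
    intro p k hk
    have h0 := norm_nonneg (l p)
    calc ‖l p‖ ^ k ≤ (1 + ‖l p‖) ^ k := by gcongr; linarith
      _ ≤ (1 + ‖l p‖) ^ 2 := pow_le_pow_right₀ (by linarith) hk
  have hbd : ∀ (k : ℕ), k ≤ 2 → ∀ u : ℝ, u ≤ U0 → ∀ p,
      ‖c p * l p ^ k * Complex.exp (l p * u)‖ ≤ w p * Real.exp (u - U0) := by
    intro k hk u hu p
    rw [norm_mul, norm_mul, norm_pow, hexp]
    have h1 : Real.exp ((l p).re * u) ≤ Real.exp ((l p).re * U0) * Real.exp (u - U0) := by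
      rw [← Real.exp_add]; apply Real.exp_le_exp.2
      nlinarith [hre p]
    calc ‖c p‖ * ‖l p‖ ^ k * Real.exp ((l p).re * u)
        ≤ ‖c p‖ * (1 + ‖l p‖) ^ 2 * (Real.exp ((l p).re * U0) * Real.exp (u - U0)) := by
          gcongr; exact hpow p k hk
      _ = (‖c p‖ * (1 + ‖l p‖) ^ 2 * Real.exp ((l p).re * U0)) * Real.exp (u - U0) := by ring
      _ ≤ _ := by gcongr; exact hb p
  have hw0 : ∀ p, 0 ≤ w p := fun p => le_trans (by positivity) (hb p)
  have hbd' : ∀ (k : ℕ), k ≤ 2 → ∀ u : ℝ, u ≤ U0 → ∀ p,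
      ‖c p * l p ^ k * Complex.exp (l p * u)‖ ≤ w p := by
    intro k hk u hu p
    refine (hbd k hk u hu p).trans ?_
    have : Real.exp (u - U0) ≤ 1 := Real.exp_le_one_iff.2 (by linarith)
    nlinarith [hw0 p]
  have hmeas : ∀ (k : ℕ) (u : ℝ), AEStronglyMeasurable (fun p => c p * l p ^ k * Complex.exp (l p * u)) μ := by
    intro k u
    apply Measurable.aestronglyMeasurable
    fun_prop
  have hIntg : ∀ (k : ℕ), k ≤ 2 → ∀ u : ℝ, u ≤ U0 →
      Integrable (fun p => c p * l p ^ k * Complex.exp (l p * u)) μ := by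
    intro k hk u hu
    exact hw.mono' (hmeas k u) (Filter.Eventually.of_forall (hbd' k hk u hu))
  have hder : ∀ k : ℕ, k ≤ 1 → ∀ u : ℝ, u < U0 → HasDerivAt (E k) (E (k + 1) u) u := by
    intro k hk u hu
    refine (hasDerivAt_integral_of_dominated_loc_of_deriv_le (μ := μ) (𝕜 := ℝ) (bound := w)
      (F := fun (u : ℝ) p => c p * l p ^ k * Complex.exp (l p * u))
      (F' := fun (u : ℝ) p => c p * l p ^ (k + 1) * Complex.exp (l p * u))
      (s := Set.Iio U0) (Iio_mem_nhds hu) (Filter.Eventually.of_forall fun u => hmeas k u)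
      (hIntg k (by omega) u hu.le) (hmeas (k + 1) u) ?_ hw ?_).2
    · exact Filter.Eventually.of_forall fun p v hv => hbd' (k + 1) (by omega) v (le_of_lt hv) p
    · refine Filter.Eventually.of_forall fun p v hv => ?_
      have h1 : HasDerivAt (fun v : ℝ => l p * (v : ℂ)) (l p * 1) v :=
        (Complex.ofRealCLM.hasDerivAt (x := v)).const_mul (l p)
      have h2 := (h1.cexp).const_mul (c p * l p ^ k)
      exact h2.congr_deriv (by ring)
  have hlog : ∀ x ∈ Set.Ioo (0 : ℝ) (4 * π), Real.log (x / 2) < U0 := by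
    intro x hx
    apply Real.log_lt_log
    · linarith [hx.1]
    · linarith [hx.2]
  have hlogd : ∀ x ∈ Set.Ioo (0 : ℝ) (4 * π), HasDerivAt (fun x : ℝ => Real.log (x / 2)) x⁻¹ x := by
    intro x hx
    have := ((hasDerivAt_id x).div_const 2).log (by have := hx.1; simp; linarith)
    refine this.congr_deriv ?_
    have := hx.1.ne'
    simp only [id]
    field_simp
  have hexpx : ∀ x ∈ Set.Ioo (0 : ℝ) (4 * π), Real.exp (Real.log (x / 2) - U0) = x / (4 * π) := by
    intro x hx
    rw [Real.exp_sub, Real.exp_log (by linarith [hx.1]), hU0, Real.exp_log (by positivity)]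
    field_simp; norm_num
  set W : ℝ := ∫ p, w p ∂μ with hW
  have hWn : 0 ≤ W := integral_nonneg hw0
  refine ⟨fun x => x⁻¹ • E 1 (Real.log (x / 2)),
    fun x => x⁻¹ • (x⁻¹ • E 2 (Real.log (x / 2))) + (-(x ^ 2)⁻¹) • E 1 (Real.log (x / 2)),
    W / (4 * π) + W / (4 * π) ^ 2, ?_⟩
  intro x hx
  have hx0 := hx.1
  have hpi := Real.pi_pos
  refine ⟨?_, ?_, ?_, ?_, by simpa using hIntg 0 (by norm_num) _ (hlog x hx).le⟩
  · have := HasDerivAt.scomp (h := fun x : ℝ => Real.log (x / 2)) x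
      (hder 0 (by norm_num) _ (hlog x hx)) (hlogd x hx)
    refine (this.congr_of_eventuallyEq ?_)
    refine Filter.Eventually.of_forall fun y => ?_
    simp [hE]
  · have h1 := HasDerivAt.scomp (h := fun x : ℝ => Real.log (x / 2)) x
      (hder 1 (by norm_num) _ (hlog x hx)) (hlogd x hx)
    exact (hasDerivAt_inv hx0.ne').smul h1
  · rw [norm_smul, Real.norm_of_nonneg (by positivity)]
    have h1 : ‖E 1 (Real.log (x / 2))‖ ≤ W * (x / (4 * π)) := by
      rw [← hexpx x hx, hW, ← integral_mul_const]
      exact norm_integral_le_of_norm_le (hw.mul_const _)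
        (Filter.Eventually.of_forall (hbd 1 (by norm_num) _ (hlog x hx).le))
    calc x⁻¹ * ‖E 1 (Real.log (x / 2))‖ ≤ x⁻¹ * (W * (x / (4 * π))) := by gcongr
      _ = W / (4 * π) := by field_simp
      _ ≤ _ := by have : 0 ≤ W / (4 * π) ^ 2 := by positivity
                  linarith
  · have e : x⁻¹ • (x⁻¹ • E 2 (Real.log (x / 2))) + (-(x ^ 2)⁻¹) • E 1 (Real.log (x / 2))
        = (x ^ 2)⁻¹ • (E 2 (Real.log (x / 2)) - E 1 (Real.log (x / 2))) := by
      rw [smul_smul, smul_sub, neg_smul, sub_eq_add_neg]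
      congr 2
      rw [pow_two, mul_inv]
    have e2 : E 2 (Real.log (x / 2)) - E 1 (Real.log (x / 2))
        = ∫ p, (c p * l p ^ 2 * Complex.exp (l p * (Real.log (x / 2) : ℝ))
          - c p * l p ^ 1 * Complex.exp (l p * (Real.log (x / 2) : ℝ))) ∂μ :=
      (integral_sub (hIntg 2 le_rfl _ (hlog x hx).le) (hIntg 1 (by norm_num) _ (hlog x hx).le)).symm
    have h1 : ‖E 2 (Real.log (x / 2)) - E 1 (Real.log (x / 2))‖ ≤ W * (x / (4 * π)) ^ 2 := by
      rw [e2, ← hexpx x hx, hW, ← integral_mul_const]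
      refine norm_integral_le_of_norm_le (hw.mul_const _) (Filter.Eventually.of_forall fun p => ?_)
      have hu := (hlog x hx).le
      generalize Real.log (x / 2) = u at hu ⊢
      rcases hl1 p with h | h
      · rw [h]; simp
        exact mul_nonneg (hw0 p) (by positivity)
      · have e3 : c p * l p ^ 2 * Complex.exp (l p * u) - c p * l p ^ 1 * Complex.exp (l p * u)
            = c p * (l p ^ 2 - l p) * Complex.exp (l p * u) := by ring
        rw [e3, norm_mul, norm_mul, hexp]
        have h1 : Real.exp ((l p).re * u) ≤ Real.exp ((l p).re * U0) * Real.exp (u - U0) ^ 2 := by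
          rw [← Real.exp_nat_mul, ← Real.exp_add]; apply Real.exp_le_exp.2
          push_cast
          nlinarith
        have h2 : ‖l p ^ 2 - l p‖ ≤ (1 + ‖l p‖) ^ 2 := by
          refine (norm_sub_le _ _).trans ?_
          rw [norm_pow]; nlinarith [norm_nonneg (l p)]
        calc ‖c p‖ * ‖l p ^ 2 - l p‖ * Real.exp ((l p).re * u)
            ≤ ‖c p‖ * (1 + ‖l p‖) ^ 2 * (Real.exp ((l p).re * U0) * Real.exp (u - U0) ^ 2) := by
              gcongr
          _ = (‖c p‖ * (1 + ‖l p‖) ^ 2 * Real.exp ((l p).re * U0)) * Real.exp (u - U0) ^ 2 := by ring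
          _ ≤ _ := by gcongr; exact hb p
    change ‖x⁻¹ • (x⁻¹ • E 2 (Real.log (x / 2))) + (-(x ^ 2)⁻¹) • E 1 (Real.log (x / 2))‖ ≤ _
    rw [e, norm_smul, Real.norm_of_nonneg (by positivity)]
    calc (x ^ 2)⁻¹ * ‖E 2 (Real.log (x / 2)) - E 1 (Real.log (x / 2))‖
        ≤ (x ^ 2)⁻¹ * (W * (x / (4 * π)) ^ 2) := by gcongr
      _ = W / (4 * π) ^ 2 := by field_simp
      _ ≤ _ := by have : 0 ≤ W / (4 * π) := by positivity
                  linarith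

/-- The `m`-th coefficient of the power series. -/
noncomputable def auxA (m : ℕ) (s : ℂ) : ℂ :=
  (-1) ^ m / ((Nat.factorial m : ℂ) * Complex.Gamma (m + 2 * Complex.I * s + 1))

/-- The numerator of the `m`-th term of the integrand. -/
noncomputable def auxK (H : ℂ → ℂ) (m : ℕ) (x : ℝ) (s : ℂ) : ℂ :=
  H s * s * (auxA m s * Complex.exp ((2 * m + 2 * Complex.I * s) * Real.log (x / 2)))

lemma auxA_differentiable (m : ℕ) : Differentiable ℂ (auxA m) := by
  have h : Differentiable ℂ (fun s : ℂ => (Complex.Gamma (m + 2 * Complex.I * s + 1))⁻¹) :=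
    Complex.differentiable_one_div_Gamma.comp (f := fun s : ℂ => m + 2 * Complex.I * s + 1) (by fun_prop)
  have : auxA m = fun s => ((-1) ^ m / (Nat.factorial m : ℂ)) * (Complex.Gamma (m + 2 * Complex.I * s + 1))⁻¹ := by
    funext s
    rw [auxA, div_mul_eq_div_div, div_eq_mul_inv _ (Complex.Gamma _)]
  rw [this]
  exact h.const_mul _

lemma auxA_norm (m : ℕ) (s : ℂ) :
    ‖auxA m s‖ = ‖(Complex.Gamma (m + 2 * Complex.I * s + 1))⁻¹‖ / (Nat.factorial m : ℝ) := by
  rw [auxA, norm_div, norm_pow, norm_neg, norm_one, one_pow, norm_mul, norm_inv, Complex.norm_natCast]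
  rw [one_div, mul_inv]; ring

lemma auxK_differentiableOn {H : ℂ → ℂ} {A : ℝ} (hH : DifferentiableOn ℂ H {s : ℂ | |s.im| ≤ A})
    (m : ℕ) (x : ℝ) : DifferentiableOn ℂ (auxK H m x) {s | |s.im| < A} := by
  unfold auxK
  refine ((hH.mono fun s (hs : |s.im| < A) => (hs.le : |s.im| ≤ A)).mul differentiableOn_id).mul ?_
  apply Differentiable.differentiableOn
  exact (auxA_differentiable m).mul (by fun_prop)

lemma aux_Hs {H : ℂ → ℂ} {A δ C : ℝ} (hA : 1 < A) (hδ : 0 < δ) (hC : 0 ≤ C)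
    (hb : ∀ s : ℂ, |s.im| ≤ A → ‖H s‖ ≤ C * (1 + ‖s‖) ^ (-(2 + δ))) (s : ℂ)
    (h1 : -1 ≤ s.im) (h2 : s.im ≤ 0) : ‖H s * s‖ ≤ C * (1 + |s.re|) ^ (-(1 + δ)) := by
  have hp : 0 < 1 + ‖s‖ := by positivity
  have e : (1 + ‖s‖) ^ (-(2 + δ)) * (1 + ‖s‖) = (1 + ‖s‖) ^ (-(1 + δ)) := by
    rw [← Real.rpow_add_one hp.ne']; congr 1; ring
  have h3 : (1 + ‖s‖) ^ (-(1 + δ)) ≤ (1 + |s.re|) ^ (-(1 + δ)) :=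
    Real.rpow_le_rpow_of_nonpos (by positivity) (by linarith [Complex.abs_re_le_norm s]) (by linarith)
  have hq : 0 ≤ (1 + ‖s‖) ^ (-(2 + δ)) := by positivity
  rw [norm_mul]
  calc ‖H s‖ * ‖s‖ ≤ (C * (1 + ‖s‖) ^ (-(2 + δ))) * (1 + ‖s‖) := by
        gcongr
        · exact hb s (abs_le.2 ⟨by linarith, by linarith⟩)
        · linarith
    _ = C * (1 + ‖s‖) ^ (-(1 + δ)) := by rw [mul_assoc, e]
    _ ≤ _ := by gcongr

lemma aux_exp_norm (m : ℕ) (s : ℂ) (u : ℝ) (h1 : -1 ≤ s.im) (h2 : s.im ≤ 0) (hu : u ≤ Real.log (2 * π)) :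
    ‖Complex.exp ((2 * m + 2 * Complex.I * s) * u)‖
      ≤ Real.exp (2 * Real.log (2 * π)) ^ m * Real.exp (2 * |u|) := by
  rw [Complex.norm_exp, ← Real.exp_nat_mul, ← Real.exp_add]
  apply Real.exp_le_exp.2
  have : (((2 * m + 2 * Complex.I * s) * u : ℂ)).re = 2 * m * u - 2 * s.im * u := by simp; ring
  rw [this]
  have hm : (0:ℝ) ≤ m := Nat.cast_nonneg m
  nlinarith [mul_le_mul_of_nonneg_left hu hm, le_abs_self u, abs_nonneg u,
    mul_le_mul_of_nonneg_left (le_abs_self u) (by linarith : 0 ≤ - s.im)]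

lemma auxK_bound {H : ℂ → ℂ} {A δ C : ℝ} (hA : 1 < A) (hδ : 0 < δ) (hC : 0 ≤ C)
    (hb : ∀ s : ℂ, |s.im| ≤ A → ‖H s‖ ≤ C * (1 + ‖s‖) ^ (-(2 + δ))) (u : ℝ) (x : ℝ)
    (hu : u = Real.log (x / 2)) (hu' : u ≤ Real.log (2 * π)) :
    ∃ D : ℝ, 0 ≤ D ∧ ∀ (m : ℕ) (s : ℂ), -1 ≤ s.im → s.im ≤ 0 →
      ‖auxK H m x s‖ ≤ (D * (Real.exp (2 * Real.log (2 * π)) ^ m / (Nat.factorial m : ℝ))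
        * (1 + |s.re|) ^ (-(1 + δ))) * Real.cosh (π * s.re) := by
  obtain ⟨c, hc, hG⟩ := aux_G1
  refine ⟨C * c * Real.exp (2 * |u|), by positivity, ?_⟩
  intro m s h1 h2
  rw [auxK, ← hu, norm_mul, norm_mul (auxA m s), auxA_norm]
  have b1 := aux_Hs hA hδ hC hb s h1 h2
  have b2 := hG m s h1 h2
  have b3 := aux_exp_norm m s u h1 h2 hu'
  have hcp := Real.cosh_pos (π * s.re)
  calc _ ≤ (C * (1 + |s.re|) ^ (-(1 + δ))) * ((c * Real.cosh (π * s.re)) / (Nat.factorial m : ℝ) *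
        (Real.exp (2 * Real.log (2 * π)) ^ m * Real.exp (2 * |u|))) := by gcongr
    _ = _ := by ring

lemma aux_pow_bound (m : ℕ) : (2 * m + 3 : ℝ) ≤ 3 * 2 ^ m := by
  induction m with
  | zero => norm_num
  | succ k ih =>
    push_cast
    rw [pow_succ]
    have : (1 : ℝ) ≤ 2 ^ k := one_le_pow₀ (by norm_num)
    linarith

lemma aux_count {f : ℕ → ℂ} (hf : Integrable f Measure.count) :
    Summable f ∧ ∫ m, f m ∂Measure.count = ∑' m, f m := by
  refine ⟨Summable.of_norm (integrable_count_iff.1 hf), ?_⟩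
  rw [integral_countable hf]
  simp

lemma aux_integrable_bracket {δ : ℝ} (hδ : 0 < δ) : Integrable fun t : ℝ => (1 + |t|) ^ (-(1 + δ)) := by
  have := integrable_one_add_norm (E := ℝ) (μ := volume) (r := 1 + δ) (by simp; exact hδ)
  simpa using this

lemma aux_tendsto_bracket {δ : ℝ} (hδ : 0 < δ) :
    Filter.Tendsto (fun t : ℝ => (1 + t) ^ (-(1 + δ))) Filter.atTop (nhds 0) :=
  (tendsto_rpow_neg_atTop (by linarith : 0 < 1 + δ)).comp (Filter.tendsto_atTop_add_const_left _ _ Filter.tendsto_id)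

lemma auxK_line_int {H : ℂ → ℂ} {A δ D : ℝ} (hA : 1 < A) (hδ : 0 < δ)
    (hH : DifferentiableOn ℂ H {s : ℂ | |s.im| ≤ A}) (m : ℕ) (x : ℝ) (r : ℝ)
    (hb : ∀ s : ℂ, -1 ≤ s.im → s.im ≤ 0 →
      ‖auxK H m x s‖ ≤ (D * (1 + |s.re|) ^ (-(1 + δ))) * Real.cosh (π * s.re))
    (hr1 : -1 ≤ r) (hr2 : r ≤ 0) :
    Integrable (fun t : ℝ => auxK H m x (t + r * Complex.I) / (Real.cosh (π * t) : ℂ)) ∧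
    ∫ t : ℝ, ‖auxK H m x (t + r * Complex.I) / (Real.cosh (π * t) : ℂ)‖ ≤ D * ∫ t : ℝ, (1 + |t|) ^ (-(1 + δ)) := by
  have hbd : ∀ t : ℝ, ‖auxK H m x (t + r * Complex.I) / (Real.cosh (π * t) : ℂ)‖ ≤ D * (1 + |t|) ^ (-(1 + δ)) := by
    intro t
    rw [norm_div, Complex.norm_real, Real.norm_of_nonneg (Real.cosh_pos _).le, div_le_iff₀ (Real.cosh_pos _)]
    have := hb (t + r * Complex.I) (by simpa) (by simpa)
    simpa using this
  have hI := (aux_integrable_bracket hδ).const_mul D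
  have h1 : Integrable (fun t : ℝ => auxK H m x (t + r * Complex.I) / (Real.cosh (π * t) : ℂ)) := by
    refine hI.mono' ?_ (Filter.Eventually.of_forall hbd)
    apply Continuous.aestronglyMeasurable
    refine Continuous.div ?_ (by fun_prop) ?_
    · refine (auxK_differentiableOn hH m x).continuousOn.comp_continuous (by fun_prop) ?_
      intro t
      simp [abs_lt]; constructor <;> linarith
    · intro t
      exact_mod_cast (Real.cosh_pos _).ne'
  refine ⟨h1, ?_⟩
  rw [← integral_const_mul]
  exact integral_mono h1.norm hI hbd

lemma aux_formula {H : ℂ → ℂ} {A δ C : ℝ} (hA : 1 < A) (hδ : 0 < δ) (hC : 0 ≤ C)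
    (hb : ∀ s : ℂ, |s.im| ≤ A → ‖H s‖ ≤ C * (1 + ‖s‖) ^ (-(2 + δ)))
    (hH : DifferentiableOn ℂ H {s : ℂ | |s.im| ≤ A}) (x : ℝ) (hx : x ∈ Set.Ioo 0 (4 * π)) :
    ∫ t : ℝ, ∑' m : ℕ, auxK H m x t / (Real.cosh (π * t) : ℂ) =
      ∑' m : ℕ, (-(∫ t : ℝ, auxK H m x (t - Complex.I) / (Real.cosh (π * t) : ℂ))
        + 2 * (∫ t : ℝ, 1 / (Real.cosh (π * t) : ℂ)) * auxK H m x (-(Complex.I / 2))) := by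
  have hu : Real.log (x / 2) ≤ Real.log (2 * π) :=
    Real.log_le_log (by linarith [hx.1]) (by linarith [hx.2])
  obtain ⟨D, hD, hK⟩ := auxK_bound hA hδ hC hb _ x rfl hu
  set R := Real.exp (2 * Real.log (2 * π)) with hR
  have L := fun m => auxK_line_int hA hδ hH m x 0 (hK m) (by norm_num) (by norm_num)
  have L1 := fun m => auxK_line_int hA hδ hH m x (-1) (hK m) (by norm_num) (by norm_num)
  simp only [Complex.ofReal_zero, zero_mul, add_zero] at L
  simp only [Complex.ofReal_neg, Complex.ofReal_one, neg_mul, one_mul, ← sub_eq_add_neg] at L1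
  rw [← integral_tsum_of_summable_integral_norm (fun m => (L m).1)]
  · congr 1
    funext m
    refine aux_shift (auxK H m x) A hA (auxK_differentiableOn hH m x)
      (fun T => D * (R ^ m / (Nat.factorial m : ℝ)) * (1 + T) ^ (-(1 + δ))) ?_ (hK m) (L m).1 (L1 m).1
    simpa using (aux_tendsto_bracket hδ).const_mul (D * (R ^ m / (Nat.factorial m : ℝ)))
  · refine Summable.of_nonneg_of_le (fun m => integral_nonneg fun t => norm_nonneg _) (fun m => (L m).2) ?_
    exact ((Real.summable_pow_div_factorial R).mul_left D).mul_right _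

lemma aux_part1 {H : ℂ → ℂ} {A δ C : ℝ} (hA : 1 < A) (hδ : 0 < δ) (hC : 0 ≤ C)
    (hb : ∀ s : ℂ, |s.im| ≤ A → ‖H s‖ ≤ C * (1 + ‖s‖) ^ (-(2 + δ)))
    (hH : DifferentiableOn ℂ H {s : ℂ | |s.im| ≤ A}) :
    ∃ F F' F'' : ℝ → ℂ, ∃ B : ℝ, ∀ x ∈ Set.Ioo (0 : ℝ) (4 * π),
      HasDerivAt F (F' x) x ∧ HasDerivAt F' (F'' x) x ∧ ‖F' x‖ ≤ B ∧ ‖F'' x‖ ≤ B ∧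
      HasSum (fun m : ℕ => ∫ t : ℝ, auxK H m x (t - Complex.I) / (Real.cosh (π * t) : ℂ)) (F x) := by
  set R := Real.exp (2 * Real.log (2 * π)) with hR
  set c : ℕ × ℝ → ℂ := fun p => H (p.2 - Complex.I) * (p.2 - Complex.I) * auxA p.1 (p.2 - Complex.I)
    / (Real.cosh (π * p.2) : ℂ) with hc
  set l : ℕ × ℝ → ℂ := fun p => 2 * p.1 + 2 * Complex.I * (p.2 - Complex.I) with hl
  set w : ℕ × ℝ → ℝ := fun p => (36 * C * R * ((4 * R) ^ p.1 / (Nat.factorial p.1 : ℝ))) * (1 + |p.2|) ^ (-(1 + δ)) with hw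
  have hcm : Measurable c := by
    apply measurable_from_prod_countable_right
    intro m
    apply Continuous.measurable
    refine Continuous.div ?_ (by fun_prop) ?_
    · refine ((Continuous.mul ?_ (by fun_prop)).mul ?_)
      · refine hH.continuousOn.comp_continuous (by fun_prop) ?_
        intro t
        simp; linarith
      · exact (auxA_differentiable m).continuous.comp (by fun_prop)
    · intro t
      exact_mod_cast (Real.cosh_pos _).ne'
  have hlm : Measurable l := by
    apply measurable_from_prod_countable_right
    intro m
    apply Continuous.measurable
    simp only [hl]
    fun_prop
  have hwi : Integrable w (Measure.count.prod volume) := by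
    apply Integrable.mul_prod (f := fun m : ℕ => 36 * C * R * ((4 * R) ^ m / (Nat.factorial m : ℝ)))
      (g := fun t : ℝ => (1 + |t|) ^ (-(1 + δ)))
    · rw [integrable_count_iff]
      exact ((Real.summable_pow_div_factorial (4 * R)).mul_left (36 * C * R)).norm
    · exact aux_integrable_bracket hδ
  have hlre : ∀ p, (l p).re = 2 * p.1 + 2 := by
    intro p; simp [hl]
  have hbd : ∀ p, ‖c p‖ * (1 + ‖l p‖) ^ 2 * Real.exp ((l p).re * Real.log (2 * π)) ≤ w p := by
    rintro ⟨m, t⟩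
    have b1 := aux_Hs hA hδ hC hb (t - Complex.I) (by simp) (by simp)
    have b2 := aux_G2 m t
    have hcp := Real.cosh_pos (π * t)
    have hc1 : ‖c (m, t)‖ ≤ C * (1 + |t|) ^ (-(1 + δ)) * (2 / (1 + t ^ 2) / (Nat.factorial m : ℝ)) := by
      simp only [hc]
      rw [norm_div, norm_mul, auxA_norm, Complex.norm_real, Real.norm_of_nonneg hcp.le]
      rw [div_le_iff₀ hcp]
      simp only [Complex.sub_re, Complex.ofReal_re, Complex.I_re, sub_zero] at b1
      calc _ ≤ (C * (1 + |t|) ^ (-(1 + δ))) * ((2 * Real.cosh (π * t) / (1 + t ^ 2)) / (Nat.factorial m : ℝ)) := by gcongr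
        _ = _ := by ring
    have hl1 : 1 + ‖l (m, t)‖ ≤ 3 * 2 ^ m * (1 + |t|) := by
      have e : l (m, t) = ((2 * m + 2 : ℝ) : ℂ) + ((2 * t : ℝ) : ℂ) * Complex.I := by
        simp only [hl]; push_cast; linear_combination (-2) * Complex.I_sq
      have : ‖l (m, t)‖ ≤ (2 * m + 2) + 2 * |t| := by
        rw [e]
        refine (norm_add_le _ _).trans ?_
        rw [norm_mul, Complex.norm_I, mul_one, Complex.norm_real, Complex.norm_real, Real.norm_of_nonneg (by positivity),
          Real.norm_eq_abs, abs_mul, abs_of_pos (by norm_num : (0:ℝ) < 2)]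
      have h2 := aux_pow_bound m
      have h3 : (0:ℝ) ≤ m := Nat.cast_nonneg m
      nlinarith [abs_nonneg t]
    have hl2 : (1 + ‖l (m, t)‖) ^ 2 ≤ 18 * 4 ^ m * (1 + t ^ 2) := by
      have h4 : (4:ℝ) ^ m = (2 ^ m) ^ 2 := by rw [← pow_mul, mul_comm, pow_mul]; norm_num
      calc (1 + ‖l (m, t)‖) ^ 2 ≤ (3 * 2 ^ m * (1 + |t|)) ^ 2 := by gcongr
        _ = 9 * (2 ^ m) ^ 2 * (1 + |t|) ^ 2 := by ring
        _ ≤ 9 * (2 ^ m) ^ 2 * (2 * (1 + t ^ 2)) := by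
            gcongr
            nlinarith [sq_abs t, sq_nonneg (1 - |t|)]
        _ = _ := by rw [h4]; ring
    have hl3 : Real.exp ((l (m, t)).re * Real.log (2 * π)) = R ^ m * R := by
      rw [hlre, hR, ← Real.exp_nat_mul, ← Real.exp_add]; congr 1; ring
    rw [hl3]
    have hRp : 0 < R := Real.exp_pos _
    calc _ ≤ (C * (1 + |t|) ^ (-(1 + δ)) * (2 / (1 + t ^ 2) / (Nat.factorial m : ℝ))) * (18 * 4 ^ m * (1 + t ^ 2)) * (R ^ m * R) := by
          gcongr
      _ = _ := by
        simp only [hw]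
        rw [mul_pow]
        have : (1 + t ^ 2) ≠ 0 := by positivity
        field_simp
        ring
  obtain ⟨F', F'', B, hF⟩ := aux_lap (Measure.count.prod volume) c l hcm hlm w hwi hbd (fun p => Or.inr (by
    rw [hlre]; have : (0:ℝ) ≤ p.1 := Nat.cast_nonneg _
    linarith))
  refine ⟨fun x : ℝ => ∫ p, c p * Complex.exp (l p * Real.log (x / 2)) ∂(Measure.count.prod volume), F', F'', B, fun x hx => ?_⟩
  obtain ⟨h1, h2, h3, h4, h5⟩ := hF x hx
  refine ⟨h1, h2, h3, h4, ?_⟩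
  have hk : ∀ m (t : ℝ), auxK H m x (t - Complex.I) / (Real.cosh (π * t) : ℂ)
      = c (m, t) * Complex.exp (l (m, t) * Real.log (x / 2)) := by
    intro m t
    simp only [auxK, hc, hl]; ring
  simp_rw [hk]
  have h6 := h5.integral_prod_left
  obtain ⟨h7, h8⟩ := aux_count h6
  rw [integral_prod _ h5, h8]
  exact h7.hasSum

lemma aux_part2 (H : ℂ → ℂ) :
    ∃ F F' F'' : ℝ → ℂ, ∃ B : ℝ, ∀ x ∈ Set.Ioo (0 : ℝ) (4 * π),
      HasDerivAt F (F' x) x ∧ HasDerivAt F' (F'' x) x ∧ ‖F' x‖ ≤ B ∧ ‖F'' x‖ ≤ B ∧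
      HasSum (fun m : ℕ => auxK H m x (-(Complex.I / 2))) (F x) := by
  set R := Real.exp (2 * Real.log (2 * π)) with hR
  obtain ⟨k, hk, hG⟩ := aux_G1
  set s0 : ℂ := -(Complex.I / 2) with hs0
  set c : ℕ → ℂ := fun m => H s0 * s0 * auxA m s0 with hc
  set l : ℕ → ℂ := fun m => 2 * m + 2 * Complex.I * s0 with hl
  have hle : ∀ m, l m = ((2 * m + 1 : ℝ) : ℂ) := by
    intro m; simp only [hl, hs0]; push_cast; linear_combination -Complex.I_sq
  set L := Real.exp (Real.log (2 * π)) with hL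
  set w : ℕ → ℝ := fun m => (9 * ‖H s0 * s0‖ * k * L) * ((4 * R) ^ m / (Nat.factorial m : ℝ)) with hw
  have hwi : Integrable w Measure.count := by
    rw [integrable_count_iff]
    exact ((Real.summable_pow_div_factorial (4 * R)).mul_left _).norm
  have hbd : ∀ p, ‖c p‖ * (1 + ‖l p‖) ^ 2 * Real.exp ((l p).re * Real.log (2 * π)) ≤ w p := by
    intro m
    have b2 := hG m s0 (by simp [hs0]; norm_num) (by simp [hs0])
    have : s0.re = 0 := by simp [hs0]
    rw [this, mul_zero, Real.cosh_zero, mul_one] at b2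
    have hc1 : ‖c m‖ ≤ ‖H s0 * s0‖ * (k / (Nat.factorial m : ℝ)) := by
      simp only [hc]
      rw [norm_mul, auxA_norm]
      gcongr
    have hl1 : 1 + ‖l m‖ ≤ 3 * 2 ^ m := by
      rw [hle, Complex.norm_real, Real.norm_of_nonneg (by positivity)]
      have h2 := aux_pow_bound m
      linarith
    have hl2 : (1 + ‖l m‖) ^ 2 ≤ 9 * 4 ^ m := by
      have h4 : (4:ℝ) ^ m = (2 ^ m) ^ 2 := by rw [← pow_mul, mul_comm, pow_mul]; norm_num
      calc (1 + ‖l m‖) ^ 2 ≤ (3 * 2 ^ m) ^ 2 := by gcongr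
        _ = _ := by rw [h4]; ring
    have hl3 : Real.exp ((l m).re * Real.log (2 * π)) = R ^ m * L := by
      rw [hle, Complex.ofReal_re, hR, hL, ← Real.exp_nat_mul, ← Real.exp_add]; congr 1; ring
    rw [hl3]
    have hRp : 0 < R := Real.exp_pos _
    have hLp : 0 < L := Real.exp_pos _
    calc _ ≤ (‖H s0 * s0‖ * (k / (Nat.factorial m : ℝ))) * (9 * 4 ^ m) * (R ^ m * L) := by
          gcongr
      _ = _ := by
        simp only [hw]
        rw [mul_pow]
        ring
  obtain ⟨F', F'', B, hF⟩ := aux_lap Measure.count c l (measurable_of_countable _) (measurable_of_countable _) w hwi hbd (fun m => by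
    rw [hle]
    rcases Nat.eq_zero_or_pos m with h | h
    · left; simp [h]
    · right
      have : (1:ℝ) ≤ m := by exact_mod_cast h
      rw [Complex.ofReal_re]; linarith)
  refine ⟨fun x : ℝ => ∫ p, c p * Complex.exp (l p * Real.log (x / 2)) ∂Measure.count, F', F'', B, fun x hx => ?_⟩
  obtain ⟨h1, h2, h3, h4, h5⟩ := hF x hx
  refine ⟨h1, h2, h3, h4, ?_⟩
  have hk : ∀ m, auxK H m x s0 = c m * Complex.exp (l m * Real.log (x / 2)) := by
    intro m
    simp only [auxK, hc, hl]; ring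
  simp_rw [hk]
  obtain ⟨h7, h8⟩ := aux_count h5
  rw [h8]
  exact h7.hasSum

/-- For `h ∈ 𝓗(A,δ)` with `A > 13`, the function `H⁺` is twice differentiable on `(0, 4π)` and
its first two derivatives are bounded there. -/
theorem Hplus_derivatives_bounded (A δ : ℝ) (hA : 13 < A) (hδ : 0 < δ) (h : ℝ → ℝ) (H : ℂ → ℂ)
    (hh : IsInHClass A δ h H) :
    ∃ C : ℝ, ∀ x ∈ Set.Ioo (0 : ℝ) (4 * π),
      DifferentiableAt ℝ (Hplus h) x ∧ DifferentiableAt ℝ (deriv (Hplus h)) x ∧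
      ‖deriv (Hplus h) x‖ ≤ C ∧ ‖deriv (deriv (Hplus h)) x‖ ≤ C := by
  obtain ⟨C, hb⟩ := hh.bound
  have hC : 0 ≤ C := by
    have := (norm_nonneg _).trans (hb 0 (by simp; linarith))
    simpa using this
  have hA1 : 1 < A := by linarith
  obtain ⟨F, F', F'', B, hF⟩ := aux_part1 hA1 hδ hC hb hh.holo
  obtain ⟨G, G', G'', B2, hG⟩ := aux_part2 H
  set κ : ℂ := 2 * (∫ t : ℝ, 1 / (Real.cosh (π * t) : ℂ)) with hκ
  set ρ : ℂ := 2 * Complex.I / (π : ℂ) with hρ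
  have hform : ∀ x ∈ Set.Ioo (0 : ℝ) (4 * π), Hplus h x = ρ * (-(F x) + κ * G x) := by
    intro x hx
    have h1 := aux_formula hA1 hδ hC hb hh.holo x hx
    have h2 : HasSum (fun m : ℕ => -(∫ t : ℝ, auxK H m x (t - Complex.I) / (Real.cosh (π * t) : ℂ))
        + κ * auxK H m x (-(Complex.I / 2))) (-(F x) + κ * G x) :=
      (hF x hx).2.2.2.2.neg.add ((hG x hx).2.2.2.2.mul_left κ)
    rw [← h2.tsum_eq, ← h1, Hplus]
    congr 2
    funext t
    rw [besselJ, ← tsum_mul_left, ← tsum_mul_right]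
    congr 1
    funext m
    rw [auxK, auxA, hh.extends_h]
    ring
  have hd1 : ∀ x ∈ Set.Ioo (0 : ℝ) (4 * π), HasDerivAt (Hplus h) (ρ * (-(F' x) + κ * G' x)) x := by
    intro x hx
    have h1 := (((hF x hx).1.neg).add ((hG x hx).1.const_mul κ)).const_mul ρ
    refine h1.congr_of_eventuallyEq ?_
    filter_upwards [Ioo_mem_nhds hx.1 hx.2] with y hy
    exact hform y hy
  have hd2 : ∀ x ∈ Set.Ioo (0 : ℝ) (4 * π),
      HasDerivAt (deriv (Hplus h)) (ρ * (-(F'' x) + κ * G'' x)) x := by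
    intro x hx
    have h1 := (((hF x hx).2.1.neg).add ((hG x hx).2.1.const_mul κ)).const_mul ρ
    refine h1.congr_of_eventuallyEq ?_
    filter_upwards [Ioo_mem_nhds hx.1 hx.2] with y hy
    exact (hd1 y hy).deriv
  have hbound : ∀ a b : ℂ, ‖a‖ ≤ B → ‖b‖ ≤ B2 → ‖ρ * (-a + κ * b)‖ ≤ ‖ρ‖ * (B + ‖κ‖ * B2) := by
    intro a b ha hb
    rw [norm_mul]
    gcongr
    refine (norm_add_le _ _).trans ?_
    rw [norm_neg, norm_mul]
    gcongr
  refine ⟨‖ρ‖ * (B + ‖κ‖ * B2), fun x hx => ⟨(hd1 x hx).differentiableAt, (hd2 x hx).differentiableAt, ?_, ?_⟩⟩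
  · rw [(hd1 x hx).deriv]
    exact hbound _ _ (hF x hx).2.2.1 (hG x hx).2.2.1
  · rw [(hd2 x hx).deriv]
    exact hbound _ _ (hF x hx).2.2.2.1 (hG x hx).2.2.2.1
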